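/- Let Γ = Γ₁ *_H Γ₂ be a free product of groups Γ₁ and Γ₂ with amalgamation over a common subgroup H. If Γ₁ and Γ₂ are sofic and H is monotileably amenable, then Γ is sofic. -/

import Mathlib

open scoped Classical Pointwise

/-- The normalized Hamming distance between two permutations of a finite set. -/
noncomputable def permDist {X : Type*} [Fintype X] (σ τ : Equiv.Perm X) : ℝ :=
  ((Finset.univ.filter fun x => σ x ≠ τ x).card : ℝ) / (Fintype.card X)

/-- A group is sofic if for every finite subset `F` and every `ε > 0` there is a map
to some symmetric group that is an `(F, ε)`-quasi-action. -/
def IsSofic (Γ : Type*) [Group Γ] : Prop :=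
  ∀ (F : Finset Γ) (ε : ℝ), 0 < ε → ∃ n : ℕ, 0 < n ∧ ∃ φ : Γ → Equiv.Perm (Fin n),
    (∀ g ∈ F, g ≠ 1 → permDist (φ g) 1 > 1 - ε) ∧
    (∀ g₁ ∈ F, ∀ g₂ ∈ F, permDist (φ (g₁⁻¹ * g₂)) ((φ g₁)⁻¹ * φ g₂) < ε)

/-- A finite subset `T` of a group is a tile if the group is the disjoint union of right
translates of `T`, i.e. there is a set `C` of centers so that `(t, c) ↦ t * c` is a
bijection from `T × C` onto the group. -/
def IsTile {G : Type*} [Group G] (T : Finset G) : Prop :=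
  ∃ C : Set G, Function.Bijective fun p : T × C => (p.1 : G) * (p.2 : G)

/-- A group is monotileably amenable if for every finite set `K` and every `ε > 0` there is
a `(K, ε)`-invariant tile `T`, i.e. a tile with `|K T \ T| < ε |T|`. -/
def MonotileablyAmenable (G : Type*) [Group G] [DecidableEq G] : Prop :=
  ∀ (K : Finset G) (ε : ℝ), 0 < ε →
    ∃ T : Finset G, IsTile T ∧ (((K * T) \ T).card : ℝ) < ε * T.card

/-!
Given a sofic model of `G b`, put its points in a random order and send each point `y` to the
element `t` of a Følner set of `H` for which `t⁻¹ y` comes first. Enlarging the Følner set changes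
this choice with small probability, so the resulting map `ρ` to `H` is almost `H`-equivariant. Let
`G b` act on the product of the model with a much more invariant Følner set `T`, by its action on
the model and by the cocycle `ρ (g y) * (ρ y)⁻¹` on `T`. In the coordinates `(z, t) ↦ (t z, t)` this
is a model `Z b × T` of `G b` in which `H` acts by translation of `T` alone, in the same way for all
`b`, while the elements outside `H` move almost all points of `Z b`.

The models act together on `(∀ b, Z b) × T × Q`. The finite group `Q` is generated by involutions,
one for each point of the `Z b`, whose short reduced words are nontrivial, and a block permutation
that moves `z b` multiplies the coordinate in `Q` by the involutions of the points it leaves and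
enters. A reduced word of the amalgam then multiplies it by a reduced word, so it has almost no
fixed points. By the normal form theorem this makes the homomorphism from the amalgam to the
quotient of a product of symmetric groups by the asymptotically trivial families faithful.
-/

open Filter Topology
open Equiv (Perm)

/-! ### Normalized Hamming distance -/

section Density

variable {X Y : Type*} [Fintype X] [Fintype Y]

/-- The proportion of the points of a finite type that satisfy a predicate: `Finset.dens`, for
predicates and with values in `ℝ`. On an empty type it is `0`. -/
noncomputable def density (P : X → Prop) : ℝ :=
  ({x | P x} : Finset X).dens

lemma density_eq_card_div_card (P : X → Prop) :
    density P = (({x | P x} : Finset X).card : ℝ) / Fintype.card X :=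
  Finset.nnratCast_dens _

lemma density_nonneg (P : X → Prop) : 0 ≤ density P := NNRat.cast_nonneg _

lemma density_mono {P Q : X → Prop} (h : ∀ x, P x → Q x) : density P ≤ density Q :=
  NNRat.cast_le.2 (Finset.dens_mono (Finset.monotone_filter_right _ fun x _ => h x))

lemma density_or_le (P Q : X → Prop) : density (fun x => P x ∨ Q x) ≤ density P + density Q := by
  simp only [density, Finset.filter_or]
  exact_mod_cast Finset.dens_union_le _ _

lemma density_le_add {P Q R : X → Prop} (h : ∀ x, R x → P x ∨ Q x) :
    density R ≤ density P + density Q :=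
  (density_mono h).trans (density_or_le P Q)

lemma density_false : density (fun _ : X => False) = 0 := by simp [density]

lemma density_not [Nonempty X] (P : X → Prop) : density (fun x => ¬ P x) = 1 - density P := by
  rw [eq_sub_iff_add_eq', density, density, ← NNRat.cast_add,
    Finset.dens_filter_add_dens_filter_not_eq_dens, Finset.dens_univ, NNRat.cast_one]

lemma density_exists_mem_le {ι : Type*} (s : Finset ι) (P : ι → X → Prop) {δ : ℝ}
    (h : ∀ i ∈ s, density (P i) ≤ δ) : density (fun x => ∃ i ∈ s, P i x) ≤ s.card * δ := by
  induction s using Finset.induction_on with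
  | empty => simp [density_false]
  | insert a s ha ih =>
    have hs := ih fun i hi => h i (Finset.mem_insert_of_mem hi)
    have ha' := h a (Finset.mem_insert_self a s)
    simp only [Finset.exists_mem_insert, Finset.card_insert_of_notMem ha, Nat.cast_succ]
    linarith [density_or_le (P a) fun x => ∃ i ∈ s, P i x]

lemma sum_density_le_one {ι : Type*} (s : Finset ι) (P : ι → X → Prop)
    (h : ∀ x, ∀ i ∈ s, ∀ j ∈ s, P i x → P j x → i = j) : ∑ i ∈ s, density (P i) ≤ 1 := by
  simp only [density, ← NNRat.cast_sum]
  rw [← NNRat.cast_one, NNRat.cast_le, ← Finset.dens_biUnion]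
  · exact Finset.dens_le_one
  · refine fun i hi j hj hij => Finset.disjoint_left.2 fun x hxi hxj => hij ?_
    exact h x i hi j hj (Finset.mem_filter.1 hxi).2 (Finset.mem_filter.1 hxj).2

lemma density_comp_equiv (e : X ≃ Y) (P : Y → Prop) :
    density (fun x => P (e x)) = density P := by
  simp only [density]
  rw [← Finset.dens_map_equiv e]
  congr 2
  ext y
  simp [Finset.mem_map_equiv]

lemma sum_density_eq (P : X × Y → Prop) :
    ∑ x, density (fun y => P (x, y)) = Fintype.card X * density P := by
  simp only [density_eq_card_div_card, Finset.card_filter, Fintype.sum_prod_type, ← Finset.sum_div,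
    Fintype.card_prod, Nat.cast_sum, Nat.cast_mul]
  rcases isEmpty_or_nonempty X
  · simp
  · field_simp

lemma density_le_of_forall_fst {P : X × Y → Prop} {ε : ℝ} (hε : 0 ≤ ε)
    (h : ∀ x, density (fun y => P (x, y)) ≤ ε) : density P ≤ ε := by
  rcases isEmpty_or_nonempty X
  · simpa [density] using hε
  refine le_of_mul_le_mul_left ?_ (Nat.cast_pos.2 (Fintype.card_pos (α := X)))
  rw [← sum_density_eq]
  exact (Finset.sum_le_card_nsmul _ _ ε fun x _ => h x).trans_eq (by simp)

lemma density_snd_le (P : Y → Prop) : density (fun p : X × Y => P p.2) ≤ density P :=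
  density_le_of_forall_fst (density_nonneg P) fun _ => le_rfl

lemma density_fst_le (P : X → Prop) : density (fun p : X × Y => P p.1) ≤ density P :=
  (density_comp_equiv (Equiv.prodComm Y X) fun p => P p.1).symm.trans_le (density_snd_le P)

end Density

section PermDist

variable {X Y : Type*} [Fintype X] [Fintype Y]

lemma permDist_eq_density (σ τ : Perm X) : permDist σ τ = density fun x => σ x ≠ τ x := by
  rw [permDist, density_eq_card_div_card]
  congr!

lemma permDist_self (σ : Perm X) : permDist σ σ = 0 := by simp [permDist]

lemma permDist_comm (σ τ : Perm X) : permDist σ τ = permDist τ σ := by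
  simp only [permDist, ne_comm]

lemma permDist_nonneg (σ τ : Perm X) : 0 ≤ permDist σ τ := by
  rw [permDist_eq_density]
  exact density_nonneg _

lemma permDist_le_one (σ τ : Perm X) : permDist σ τ ≤ 1 := by
  rw [permDist_eq_density, density, ← NNRat.cast_one, NNRat.cast_le]
  exact Finset.dens_le_one

lemma permDist_triangle (σ τ υ : Perm X) :
    permDist σ υ ≤ permDist σ τ + permDist τ υ := by
  simp only [permDist_eq_density]
  refine density_le_add fun x hx => ?_
  by_contra! h
  exact hx (h.1.trans h.2)

lemma permDist_mul_left (π σ τ : Perm X) : permDist (π * σ) (π * τ) = permDist σ τ := by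
  simp [permDist]

lemma permDist_mul_right (π σ τ : Perm X) : permDist (σ * π) (τ * π) = permDist σ τ := by
  simp only [permDist_eq_density]
  exact density_comp_equiv π fun x => σ x ≠ τ x

lemma permDist_inv (σ τ : Perm X) : permDist σ⁻¹ τ⁻¹ = permDist σ τ := by
  rw [← permDist_mul_left σ, ← permDist_mul_right τ, permDist_comm]
  simp

lemma permDist_permCongrHom (e : X ≃ Y) (σ τ : Perm X) :
    permDist (e.permCongrHom σ) (e.permCongrHom τ) = permDist σ τ := by
  rw [permDist_eq_density, permDist_eq_density, ← density_comp_equiv e]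
  simp

lemma density_fixed_eq [Nonempty X] (σ : Perm X) :
    density (fun x => σ x = x) = 1 - permDist σ 1 := by
  simp [permDist_eq_density, density_not]

end PermDist

section GoodPoints

variable {G X : Type*} [Group G]

lemma IsSofic.exists_almost_hom (hG : IsSofic G) (F : Finset G) {ε : ℝ} (hε : 0 < ε) :
    ∃ n : ℕ, 0 < n ∧ ∃ σ : G → Perm (Fin n),
      (∀ g ∈ F, ∀ h ∈ F, permDist (σ (g * h)) (σ g * σ h) ≤ ε) ∧
      ∀ g ∈ F, ∀ h ∈ F, g ≠ h → 1 - ε ≤ permDist (σ g) (σ h) := by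
  set F' : Finset G := insert 1 (F ∪ F⁻¹ ∪ F⁻¹ * F) with hF'
  have one_mem : 1 ∈ F' := by simp [hF']
  have mem {g} (hg : g ∈ F) : g ∈ F' := by simp [hF', hg]
  have inv_mem {g} (hg : g ∈ F) : g⁻¹ ∈ F' := by simp [hF', hg]
  have div_mem {g h} (hg : g ∈ F) (hh : h ∈ F) : g⁻¹ * h ∈ F' := by
    simp [hF', Finset.mul_mem_mul (Finset.inv_mem_inv hg) hh]
  obtain ⟨n, hn, σ, hfree, hdiv⟩ := hG F' (ε / 3) (by positivity)
  refine ⟨n, hn, σ, fun g hg h hh => ?_, fun g hg h hh hgh => ?_⟩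
  · have h_inv : permDist (σ g⁻¹)⁻¹ (σ g) ≤ 2 * (ε / 3) := by
      have h₁ : permDist (σ g⁻¹) ((σ g)⁻¹ * σ 1) < ε / 3 := by
        simpa using hdiv g (mem hg) 1 one_mem
      have h₂ : permDist (σ 1) 1 < ε / 3 := by simpa using hdiv 1 one_mem 1 one_mem
      have h₃ := permDist_triangle (σ g⁻¹) ((σ g)⁻¹ * σ 1) ((σ g)⁻¹ * 1)
      rw [permDist_mul_left, mul_one] at h₃
      rw [← permDist_inv, inv_inv]
      linarith
    have h_div : permDist (σ (g * h)) ((σ g⁻¹)⁻¹ * σ h) < ε / 3 := by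
      simpa using hdiv g⁻¹ (inv_mem hg) h (mem hh)
    have := permDist_triangle (σ (g * h)) ((σ g⁻¹)⁻¹ * σ h) (σ g * σ h)
    rw [permDist_mul_right] at this
    linarith
  · have h₁ := hfree (g⁻¹ * h) (div_mem hg hh) (by rwa [ne_eq, inv_mul_eq_one])
    have h₂ := hdiv g (mem hg) h (mem hh)
    have h₃ := permDist_triangle (σ (g⁻¹ * h)) ((σ g)⁻¹ * σ h) 1
    have h₄ : permDist ((σ g)⁻¹ * σ h) 1 = permDist (σ g) (σ h) := by
      rw [← permDist_mul_left (σ g), mul_inv_cancel_left, mul_one, permDist_comm]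
    linarith

/-- At the point `x`, the map `σ` looks like a free action of `G`, as far as this can be tested with
elements of `S`: it is multiplicative for factors in `S` and has no coincidences among products of
two elements of `S`. -/
def IsGoodPoint (σ : G → Perm X) (S : Finset G) (x : X) : Prop :=
  (∀ g ∈ S, ∀ h ∈ S, σ (g * h) x = σ g (σ h x)) ∧ Set.InjOn (fun g => σ g x) (S * S : Finset G)

lemma IsGoodPoint.mono {σ : G → Perm X} {S S' : Finset G} {x : X} (h : IsGoodPoint σ S' x)
    (hS : S ⊆ S') : IsGoodPoint σ S x :=
  ⟨fun g hg k hk => h.1 g (hS hg) k (hS hk), h.2.mono (Finset.mul_subset_mul hS hS)⟩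

lemma density_coincidence_le [Fintype X] [Nonempty X] {σ τ : Perm X} {ε : ℝ}
    (h : 1 - ε ≤ permDist σ τ) : density (fun x => σ x = τ x) ≤ ε := by
  rw [permDist_eq_density, density_not] at h
  linarith

lemma IsSofic.exists_density_not_isGoodPoint_le (hG : IsSofic G) (S : Finset G) {ε : ℝ}
    (hε : 0 < ε) : ∃ n : ℕ, 0 < n ∧ ∃ σ : G → Perm (Fin n),
      density (fun x => ¬ IsGoodPoint σ S x) ≤ ε := by
  set P : Finset (G × G) := S ×ˢ S ∪ (S * S) ×ˢ (S * S) with hP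
  set η : ℝ := ε / (2 * (P.card + 1)) with hη
  have hη' : P.card * (2 * η) ≤ ε := by
    rw [hη]
    field_simp
    linarith
  obtain ⟨n, hn, σ, hmul, hne⟩ :=
    hG.exists_almost_hom (S ∪ S * S) (ε := η) (by positivity)
  have : NeZero n := ⟨hn.ne'⟩
  have hmem : ∀ p ∈ P, p.1 ∈ S ∪ S * S ∧ p.2 ∈ S ∪ S * S := fun p hp => by
    simp only [hP, Finset.mem_union, Finset.mem_product] at hp ⊢
    tauto
  refine ⟨n, hn, σ, (density_mono fun x hx => ?_).trans ((density_exists_mem_le P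
    (fun p x => σ (p.1 * p.2) x ≠ σ p.1 (σ p.2 x) ∨ (p.1 ≠ p.2 ∧ σ p.1 x = σ p.2 x))
    fun p hp => ?_).trans hη')⟩
  · by_contra! hx'
    refine hx ⟨fun g hg h hh => (hx' (g, h) ?_).1, fun g hg h hh hgh => ?_⟩
    · simp [hP, hg, hh]
    · by_contra h'
      exact (hx' (g, h) (Finset.mem_union_right _ (Finset.mk_mem_product hg hh))).2 h' hgh
  · have hmul' := hmul p.1 (hmem p hp).1 p.2 (hmem p hp).2
    have hne' : density (fun x => p.1 ≠ p.2 ∧ σ p.1 x = σ p.2 x) ≤ η := by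
      by_cases h : p.1 = p.2
      · simpa [h, density_false] using by positivity
      · simpa [h] using density_coincidence_le (hne p.1 (hmem p hp).1 p.2 (hmem p hp).2 h)
    rw [permDist_eq_density] at hmul'
    refine (density_or_le _ _).trans ?_
    simp only [Equiv.Perm.mul_apply] at hmul'
    linarith

lemma density_not_isGoodPoint_fst_le {Y : Type*} [Fintype X] [Fintype Y] {σ : G → Perm X}
    {S : Finset G} {ε : ℝ} (hσ : density (fun x => ¬ IsGoodPoint σ S x) ≤ ε) :
    density (fun p : X × Y => ¬ IsGoodPoint σ S p.1) ≤ ε :=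
  (density_fst_le fun x => ¬ IsGoodPoint σ S x).trans hσ

end GoodPoints

/-! ### Random minima and Følner sets -/

section Argmin

variable {ι X : Type*} [LinearOrder X]

/-- `f` attains its minimum over the finite set `U` at `u`. -/
def IsArgmin (U : Finset ι) (f : ι → X) (u : ι) : Prop :=
  u ∈ U ∧ ∀ v ∈ U, f u ≤ f v

lemma exists_isArgmin {U : Finset ι} (hU : U.Nonempty) (f : ι → X) : ∃ u, IsArgmin U f u :=
  Finset.exists_min_image U f hU

namespace IsArgmin

variable {U V : Finset ι} {f : ι → X} {u v : ι}

lemma eq (hu : IsArgmin U f u) (hv : IsArgmin U f v) (hf : Set.InjOn f U) : u = v :=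
  hf hu.1 hv.1 (le_antisymm (hu.2 v hv.1) (hv.2 u hu.1))

lemma subset (hu : IsArgmin V f u) (huU : u ∈ U) (hUV : U ⊆ V) : IsArgmin U f u :=
  ⟨huU, fun v hv => hu.2 v (hUV hv)⟩

lemma comp_swap {a : ι → X} {ω : Perm X} (hu : IsArgmin U (ω ∘ a) u) (hv : v ∈ U) :
    IsArgmin U ((ω * Equiv.swap (a u) (a v) : Perm X) ∘ a) v := by
  refine ⟨hv, fun w hw => ?_⟩
  simp only [Function.comp_apply, Equiv.Perm.mul_apply, Equiv.swap_apply_right]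
  by_cases h₁ : a w = a u
  · rw [h₁, Equiv.swap_apply_left]
    exact hu.2 v hv
  by_cases h₂ : a w = a v
  · rw [h₂, Equiv.swap_apply_right]
  · rw [Equiv.swap_apply_of_ne_of_ne h₁ h₂]
    exact hu.2 w hw

end IsArgmin

variable [Fintype X]

lemma card_mul_density_isArgmin_le {U : Finset ι} {a : ι → X} (ha : Set.InjOn a U)
    (u : ι) : U.card * density (fun ω : Perm X => IsArgmin U (ω ∘ a) u) ≤ 1 :=
  calc U.card * density (fun ω : Perm X => IsArgmin U (ω ∘ a) u)
      = ∑ _v ∈ U, density (fun ω : Perm X => IsArgmin U (ω ∘ a) u) := by simp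
    _ ≤ ∑ v ∈ U, density (fun ω : Perm X => IsArgmin U (ω ∘ a) v) :=
        Finset.sum_le_sum fun v hv =>
          (density_mono fun ω hω => hω.comp_swap hv).trans_eq
            (density_comp_equiv (Equiv.mulRight (Equiv.swap (a u) (a v)))
              fun ω : Perm X => IsArgmin U (ω ∘ a) v)
    _ ≤ 1 := sum_density_le_one _ _ fun ω _ _ _ _ hv hw =>
        hv.eq hw (ω.injective.comp_injOn ha)

-- The minimum over `A ∪ B` is attained at a uniformly random place, and unless that place lies in
-- `symmDiff A B`, both minima are attained there.
lemma density_argmin_ne_le {A B : Finset ι} {a : ι → X} (ha : Set.InjOn a (A ∪ B : Finset ι))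
    (hAB : (A ∪ B).Nonempty) {p q : Perm X → ι} (hp : ∀ ω : Perm X, IsArgmin A (ω ∘ a) (p ω))
    (hq : ∀ ω : Perm X, IsArgmin B (ω ∘ a) (q ω)) :
    density (fun ω => p ω ≠ q ω) ≤ (symmDiff A B).card / (A ∪ B).card := by
  have hinj (ω : Perm X) : Set.InjOn (ω ∘ a) (A ∪ B : Finset ι) := ω.injective.comp_injOn ha
  have hA : A ⊆ A ∪ B := Finset.subset_union_left
  have hB : B ⊆ A ∪ B := Finset.subset_union_right
  have hne (ω : Perm X) (hω : p ω ≠ q ω) : ∃ u ∈ symmDiff A B, IsArgmin (A ∪ B) (ω ∘ a) u := by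
    obtain ⟨u, hu⟩ := exists_isArgmin hAB (ω ∘ a)
    refine ⟨u, ?_, hu⟩
    by_contra h
    have hu_mem : u ∈ A ∧ u ∈ B := by
      have := Finset.mem_union.1 hu.1
      rw [Finset.mem_symmDiff] at h
      tauto
    exact hω (((hp ω).eq (hu.subset hu_mem.1 hA) ((hinj ω).mono hA)).trans
      ((hu.subset hu_mem.2 hB).eq (hq ω) ((hinj ω).mono hB)))
  have hcard : (0 : ℝ) < (A ∪ B).card := Nat.cast_pos.2 hAB.card_pos
  rw [div_eq_mul_one_div]
  refine (density_mono hne).trans (density_exists_mem_le _ _ fun u _ => ?_)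
  rw [le_div_iff₀' hcard]
  exact card_mul_density_isArgmin_le ha u

end Argmin

section Folner

variable {H : Type*} [Group H]

/-- A nonempty finite set `T` is `(K, ε)`-Følner if all but a proportion `ε` of its points stay in
`T` when multiplied on the left by any element of `K`. -/
structure IsFolner (K : Finset H) (ε : ℝ) (T : Finset H) : Prop where
  nonempty : T.Nonempty
  density_le : density (fun t : T => ∃ k ∈ K, k * (t : H) ∉ T) ≤ ε

/-- Amenability of a discrete group, as the existence of Følner sets. -/
def FolnerAmenable (H : Type*) [Group H] : Prop :=
  ∀ (K : Finset H) (ε : ℝ), 0 < ε → ∃ T : Finset H, IsFolner K ε T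

lemma MonotileablyAmenable.folnerAmenable [DecidableEq H] (hH : MonotileablyAmenable H) :
    FolnerAmenable H := by
  intro K ε hε
  obtain ⟨T, -, hT⟩ := hH K (ε / (K.card + 1)) (by positivity)
  have hT₀ : T.Nonempty := by
    rw [Finset.nonempty_iff_ne_empty]
    rintro rfl
    simp at hT
  have hTpos : (0 : ℝ) < T.card := Nat.cast_pos.2 hT₀.card_pos
  have hK : K.card * (ε / (K.card + 1)) ≤ ε := by
    field_simp
    linarith
  refine ⟨T, hT₀, (density_exists_mem_le K _ fun k hk => ?_).trans hK⟩
  rw [density_eq_card_div_card, Fintype.card_coe, div_le_iff₀ hTpos]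
  refine le_trans (Nat.cast_le.2 ?_) hT.le
  refine Finset.card_le_card_of_injOn (fun t : T => k * (t : H)) (fun t ht => ?_)
    fun t _ t' _ h => Subtype.ext (mul_left_cancel h)
  exact Finset.mem_sdiff.2 ⟨Finset.mul_mem_mul hk t.2, by simpa using ht⟩

lemma IsFolner.mono {K T : Finset H} {ε ε' : ℝ} (hT : IsFolner K ε T) (h : ε ≤ ε') :
    IsFolner K ε' T :=
  ⟨hT.nonempty, hT.density_le.trans h⟩

lemma IsFolner.card_symmDiff_smul_le {K T : Finset H} {ε : ℝ} (hT : IsFolner K ε T) {k : H}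
    (hk : k ∈ K) : ((symmDiff T (k • T)).card : ℝ) ≤ 2 * ε * T.card := by
  have hTpos : (0 : ℝ) < T.card := Nat.cast_pos.2 hT.nonempty.card_pos
  have hout : ((k • T \ T).card : ℝ) ≤ ε * T.card := by
    have h := (density_mono fun t ht => ⟨k, hk, ht⟩).trans hT.density_le
    rw [density_eq_card_div_card, Fintype.card_coe, div_le_iff₀ hTpos] at h
    refine le_trans (Nat.cast_le.2 ?_) h
    refine Finset.card_le_card_of_surjOn (fun t : T => k * (t : H)) fun x hx => ?_
    obtain ⟨hxk, hxT⟩ := Finset.mem_sdiff.1 hx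
    obtain ⟨t, ht, rfl⟩ := Finset.mem_smul_finset.1 hxk
    exact ⟨⟨t, ht⟩, by simpa using hxT, rfl⟩
  have hin : (T \ k • T).card = (k • T \ T).card :=
    Finset.card_sdiff_comm (Finset.card_smul_finset k T).symm
  rw [symmDiff, Finset.sup_eq_union, Finset.card_union_of_disjoint disjoint_sdiff_sdiff, hin]
  push_cast
  linarith

/-- A permutation of `T` that agrees with left multiplication by `h` wherever the latter stays
in `T`. -/
noncomputable def translatePerm (T : Finset H) (h : H) : Perm T :=
  let e : {t : T // h * t ∈ T} ≃ {t : T // h⁻¹ * t ∈ T} :=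
    { toFun := fun t => ⟨⟨h * t.1, t.2⟩, by simp⟩
      invFun := fun t => ⟨⟨h⁻¹ * t.1, t.2⟩, by simp⟩
      left_inv := fun t => by simp
      right_inv := fun t => by simp }
  e.extendSubtype

lemma translatePerm_apply {T : Finset H} {h : H} {t : T} (ht : h * (t : H) ∈ T) :
    translatePerm T h t = ⟨h * t, ht⟩ :=
  Equiv.extendSubtype_apply_of_mem _ t ht

lemma translatePerm_mul_apply {T : Finset H} {h k : H} {t : T} (hk : k * (t : H) ∈ T)
    (hhk : h * k * (t : H) ∈ T) :
    translatePerm T (h * k) t = translatePerm T h (translatePerm T k t) := by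
  rw [translatePerm_apply hk, translatePerm_apply hhk,
    translatePerm_apply (by simpa [mul_assoc] using hhk)]
  simp [mul_assoc]

lemma translatePerm_apply_ne {T : Finset H} {h : H} (h1 : h ≠ 1) {t : T} (ht : h * (t : H) ∈ T) :
    translatePerm T h t ≠ t := by
  rw [translatePerm_apply ht, ne_eq, Subtype.ext_iff, mul_eq_right]
  exact h1

lemma IsFolner.permDist_translatePerm_mul_le {K T : Finset H} {ε : ℝ} (hT : IsFolner K ε T)
    {h k : H} (hk : k ∈ K) (hhk : h * k ∈ K) :
    permDist (translatePerm T (h * k)) (translatePerm T h * translatePerm T k) ≤ ε := by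
  rw [permDist_eq_density]
  refine (density_mono fun t ht => ?_).trans hT.density_le
  by_contra! hin
  exact ht (translatePerm_mul_apply (hin k hk) (hin (h * k) hhk))

lemma IsFolner.density_translatePerm_eq_le {K T : Finset H} {ε : ℝ} (hT : IsFolner K ε T)
    {h : H} (hh : h ∈ K) (h1 : h ≠ 1) : density (fun t => translatePerm T h t = t) ≤ ε := by
  refine (density_mono fun t ht => ?_).trans hT.density_le
  by_contra! hin
  exact translatePerm_apply_ne h1 (hin h hh) ht

end Folner

section AlmostEquivariant

variable {H G X : Type*} [Group H] [Group G] {f : H →* G} {σ : G → Perm X} {S : Finset G}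

lemma IsGoodPoint.prodCongr_refl {Y : Type*} {x : X} (hx : IsGoodPoint σ S x) (y : Y) :
    IsGoodPoint (fun g => (σ g).prodCongr (Equiv.refl Y)) S (x, y) :=
  ⟨fun g hg h hh => by simp [hx.1 g hg h hh],
    fun g hg h hh hgh => hx.2 hg hh (congrArg Prod.fst hgh)⟩

lemma IsGoodPoint.inv_apply_map_mul {h t : H} {y : X} (hy : IsGoodPoint σ S ((σ (f t))⁻¹ y))
    (hh : f h ∈ S) (ht : f t ∈ S) : (σ (f (h * t)))⁻¹ (σ (f h) y) = (σ (f t))⁻¹ y := by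
  rw [Equiv.Perm.inv_eq_iff_eq, map_mul, hy.1 _ hh _ ht]
  simp

lemma injOn_inv_apply_of_isGoodPoint (hf : Function.Injective f) {T : Finset H} {h : H}
    (h1 : 1 ∈ S) (hh : f h ∈ S) (hTS : ∀ t ∈ T, f t ∈ S) {y : X}
    (hy : ∀ t ∈ T, IsGoodPoint σ S ((σ (f t))⁻¹ y))
    (hhy : ∀ t ∈ T, IsGoodPoint σ S ((σ (f t))⁻¹ (σ (f h) y))) :
    Set.InjOn (fun s => (σ (f s))⁻¹ (σ (f h) y)) (T ∪ h • T : Finset H) := by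
  have hmem : ∀ s ∈ T ∪ h • T, f s ∈ S * S := fun s hs => by
    rcases Finset.mem_union.1 hs with hs | hs
    · simpa using Finset.mul_mem_mul h1 (hTS s hs)
    · obtain ⟨t, ht, rfl⟩ := Finset.mem_smul_finset.1 hs
      simpa using Finset.mul_mem_mul hh (hTS t ht)
  have hgood : ∀ s ∈ T ∪ h • T, IsGoodPoint σ S ((σ (f s))⁻¹ (σ (f h) y)) := fun s hs => by
    rcases Finset.mem_union.1 hs with hs | hs
    · exact hhy s hs
    · obtain ⟨t, ht, rfl⟩ := Finset.mem_smul_finset.1 hs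
      rw [smul_eq_mul, (hy t ht).inv_apply_map_mul hh (hTS t ht)]
      exact hy t ht
  intro s hs s' hs' hss'
  refine hf ((hgood s hs).2 (hmem s hs) (hmem s' hs') ?_)
  simpa using congrArg (σ (f s')) hss'.symm

lemma density_argmin_translate_ne_le_of_isGoodPoint [Fintype X] [LinearOrder X]
    (hf : Function.Injective f) {E T : Finset H} {η : ℝ} (hT : IsFolner E η T) {h : H}
    (hE : h ∈ E) (h1 : 1 ∈ S) (hh : f h ∈ S) (hTS : ∀ t ∈ T, f t ∈ S) {ρ : X × Perm X → H}
    (hρ : ∀ y (ω : Perm X), IsArgmin T (ω ∘ fun t => (σ (f t))⁻¹ y) (ρ (y, ω))) {y : X}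
    (hy : ∀ t ∈ T, IsGoodPoint σ S ((σ (f t))⁻¹ y))
    (hhy : ∀ t ∈ T, IsGoodPoint σ S ((σ (f t))⁻¹ (σ (f h) y))) :
    density (fun ω => ρ (σ (f h) y, ω) ≠ h * ρ (y, ω)) ≤ 2 * η := by
  have hshift (t) (ht : t ∈ T) : (σ (f (h * t)))⁻¹ (σ (f h) y) = (σ (f t))⁻¹ y :=
    (hy t ht).inv_apply_map_mul hh (hTS t ht)
  have hargmin (ω : Perm X) :
      IsArgmin (h • T) (ω ∘ fun s => (σ (f s))⁻¹ (σ (f h) y)) (h * ρ (y, ω)) := by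
    obtain ⟨hmem, hmin⟩ := hρ y ω
    refine ⟨Finset.smul_mem_smul_finset hmem, fun s hs => ?_⟩
    obtain ⟨t, ht, rfl⟩ := Finset.mem_smul_finset.1 hs
    simpa only [Function.comp_apply, smul_eq_mul, hshift t ht, hshift _ hmem] using hmin t ht
  have hne : (T ∪ h • T).Nonempty := hT.nonempty.mono Finset.subset_union_left
  have hη : 0 ≤ η := (density_nonneg _).trans hT.density_le
  refine (density_argmin_ne_le (injOn_inv_apply_of_isGoodPoint hf h1 hh hTS hy hhy) hne
    (hρ (σ (f h) y)) hargmin).trans ?_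
  rw [div_le_iff₀ (Nat.cast_pos.2 hne.card_pos)]
  refine (hT.card_symmDiff_smul_le hE).trans ?_
  gcongr
  exact Finset.subset_union_left

lemma density_exists_not_isGoodPoint_inv_le [Fintype X] (T : Finset H) {δ : ℝ}
    (hσ : density (fun x => ¬ IsGoodPoint σ S x) ≤ δ) :
    density (fun y => ∃ t ∈ T, ¬ IsGoodPoint σ S ((σ (f t))⁻¹ y)) ≤ T.card * δ :=
  density_exists_mem_le T _ fun t _ =>
    (density_comp_equiv (σ (f t))⁻¹ fun y => ¬ IsGoodPoint σ S y).trans_le hσ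

lemma density_argmin_translate_ne_le [Fintype X] [LinearOrder X] (hf : Function.Injective f)
    {E T : Finset H} {η δ : ℝ} (hT : IsFolner E η T) {h : H} (hE : h ∈ E) (h1 : 1 ∈ S)
    (hh : f h ∈ S) (hTS : ∀ t ∈ T, f t ∈ S) {ρ : X × Perm X → H}
    (hρ : ∀ y (ω : Perm X), IsArgmin T (ω ∘ fun t => (σ (f t))⁻¹ y) (ρ (y, ω)))
    (hσ : density (fun x => ¬ IsGoodPoint σ S x) ≤ δ) :
    density (fun p : X × Perm X => ρ (σ (f h) p.1, p.2) ≠ h * ρ p) ≤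
      2 * η + 2 * T.card * δ := by
  have hη : 0 ≤ η := (density_nonneg _).trans hT.density_le
  let Bad (y : X) : Prop := ∃ t ∈ T, ¬ IsGoodPoint σ S ((σ (f t))⁻¹ y)
  have hBad : density (fun y => Bad y ∨ Bad (σ (f h) y)) ≤ 2 * T.card * δ := by
    have := density_exists_not_isGoodPoint_inv_le (f := f) T hσ
    linarith [density_or_le Bad fun y => Bad (σ (f h) y), density_comp_equiv (σ (f h)) Bad]
  have hgood : density (fun p : X × Perm X => ¬ (Bad p.1 ∨ Bad (σ (f h) p.1)) ∧
      ρ (σ (f h) p.1, p.2) ≠ h * ρ p) ≤ 2 * η := by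
    refine density_le_of_forall_fst (by positivity) fun y => ?_
    by_cases hy : Bad y ∨ Bad (σ (f h) y)
    · simpa [hy, density_false] using hη
    · simp only [hy, not_false_iff, true_and]
      simp only [Bad, not_or, not_exists, not_and, not_not] at hy
      exact density_argmin_translate_ne_le_of_isGoodPoint hf hT hE h1 hh hTS hρ hy.1 hy.2
  exact (density_le_add fun p hp => (em _).symm.imp_left fun hy => ⟨hy, hp⟩).trans
    (add_le_add hgood ((density_fst_le _).trans hBad))

-- `ρ (y, ω)` is the `t ∈ T` for which the point `(σ (f t))⁻¹ y` of the approximate `f.range`-orbit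
-- of `y` comes first in the random order `ω`.
lemma IsSofic.exists_almost_equivariant (hG : IsSofic G) (hf : Function.Injective f)
    {E T : Finset H} {η : ℝ} (hT : IsFolner E η T) (S : Finset G) {δ : ℝ} (hδ : 0 < δ) :
    ∃ (Z : Type) (_ : Fintype Z) (_ : Nonempty Z) (σ : G → Perm Z) (ρ : Z → H),
      (∀ z, ρ z ∈ T) ∧ density (fun z => ¬ IsGoodPoint σ S z) ≤ δ ∧
      ∀ h ∈ E, density (fun z => ρ (σ (f h) z) ≠ h * ρ z) ≤ 2 * η + δ := by
  set S' : Finset G := insert 1 (S ∪ (E ∪ T).image f) with hS'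
  have hSS' : S ⊆ S' := fun g hg => by simp [hS', hg]
  have hfS' (h) (hh : h ∈ E ∪ T) : f h ∈ S' :=
    Finset.mem_insert_of_mem (Finset.mem_union_right _ (Finset.mem_image_of_mem f hh))
  have hE (h) (hh : h ∈ E) : f h ∈ S' := hfS' h (Finset.mem_union_left _ hh)
  have hTS (t) (ht : t ∈ T) : f t ∈ S' := hfS' t (Finset.mem_union_right _ ht)
  have hT₁ : (1 : ℝ) ≤ T.card := Nat.one_le_cast.2 hT.nonempty.card_pos
  obtain ⟨n, hn, σ, hσ⟩ :=
    hG.exists_density_not_isGoodPoint_le S' (ε := δ / (2 * T.card)) (by positivity)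
  have : NeZero n := ⟨hn.ne'⟩
  choose ρ hρ using fun p : Fin n × Perm (Fin n) =>
    exists_isArgmin hT.nonempty (p.2 ∘ fun t => (σ (f t))⁻¹ p.1)
  refine ⟨Fin n × Perm (Fin n), instFintypeProd _ _, inferInstance,
    fun g => (σ g).prodCongr (Equiv.refl _), ρ, fun p => (hρ p).1, ?_, fun h hh => ?_⟩
  · calc density (fun p => ¬ IsGoodPoint (fun g => (σ g).prodCongr (Equiv.refl _)) S p)
        ≤ density (fun p : Fin n × Perm (Fin n) => ¬ IsGoodPoint σ S' p.1) :=
          density_mono fun p => mt fun hp => (hp.mono hSS').prodCongr_refl p.2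
      _ ≤ δ / (2 * T.card) := density_not_isGoodPoint_fst_le hσ
      _ ≤ δ := div_le_self hδ.le (by linarith)
  · have hδ' : 2 * T.card * (δ / (2 * T.card)) = δ := by field_simp
    have := density_argmin_translate_ne_le hf hT hh (Finset.mem_insert_self _ _) (hE h hh) hTS
      (fun y ω => hρ (y, ω)) hσ
    rwa [hδ'] at this

end AlmostEquivariant

/-! ### Models relative to the amalgamated subgroup -/

section Block

variable {H G Z : Type*} [Group H] [Group G] {T : Finset H}

/-- The skew product of `σ` with the cocycle `(g, y) ↦ ρ (σ g y) * (ρ y)⁻¹`, acting on `T` by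
`translatePerm`. -/
noncomputable def skewProduct (σ : G → Perm Z) (ρ : Z → H) (T : Finset H) (g : G) :
    Perm (Z × T) :=
  Equiv.prodShear (σ g) fun y => translatePerm T (ρ (σ g y) * (ρ y)⁻¹)

/-- The skew product in the coordinates `(z, t) ↦ (σ (f t) z, t)`, in which `f h` acts as left
multiplication by `h` on `T` and does not move `Z`. -/
noncomputable def blockAction (f : H →* G) (σ : G → Perm Z) (ρ : Z → H) (T : Finset H) (g : G) :
    Perm (Z × T) :=
  (Equiv.prodCongrLeft fun t : T => σ (f t))⁻¹ * skewProduct σ ρ T g *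
    Equiv.prodCongrLeft fun t : T => σ (f t)

variable {f : H →* G} {σ : G → Perm Z} {ρ : Z → H} {S : Finset G}

lemma skewProduct_mul_apply {T₀ : Finset H} (hρ : ∀ y, ρ y ∈ T₀) {g h : G} {y : Z} {t : T}
    (hy : σ (g * h) y = σ g (σ h y)) (ht : ∀ d ∈ T₀ * T₀⁻¹, d * (t : H) ∈ T) :
    skewProduct σ ρ T (g * h) (y, t) = skewProduct σ ρ T g (skewProduct σ ρ T h (y, t)) := by
  have hmem (y z : Z) : ρ y * (ρ z)⁻¹ * (t : H) ∈ T :=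
    ht _ (Finset.mul_mem_mul (hρ y) (Finset.inv_mem_inv (hρ z)))
  simp only [skewProduct, Equiv.prodShear_apply, hy, Prod.mk.injEq, true_and]
  rw [← translatePerm_mul_apply (hmem _ _) (by simpa using hmem _ _), mul_assoc,
    inv_mul_cancel_left]

lemma blockAction_map_apply {h : H} {z : Z} {t : T} (hz : IsGoodPoint σ S z) (hh : f h ∈ S)
    (ht : f t ∈ S) (hht : h * (t : H) ∈ T)
    (hρ : ρ (σ (f h) (σ (f t) z)) = h * ρ (σ (f t) z)) :
    blockAction f σ ρ T (f h) (z, t) = (z, translatePerm T h t) := by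
  rw [blockAction, Equiv.Perm.mul_apply, Equiv.Perm.mul_apply, Equiv.Perm.inv_eq_iff_eq]
  simp only [skewProduct, Equiv.prodCongrLeft_apply, Equiv.prodShear_apply, hρ,
    mul_inv_cancel_right, translatePerm_apply hht, map_mul, hz.1 _ hh _ ht]

lemma blockAction_apply_fst_ne {g : G} (hg : g ∉ f.range) {z : Z} (t : T)
    (hz : IsGoodPoint σ S z) (h1 : 1 ∈ S) (hgS : g ∈ S) (hTS : ∀ t ∈ T, f t ∈ S) :
    (blockAction f σ ρ T g (z, t)).1 ≠ z := by
  intro hfix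
  set t' : T := (skewProduct σ ρ T g (σ (f t) z, t)).2
  have hfix' : (σ (f t'))⁻¹ (σ g (σ (f t) z)) = z := hfix
  rw [Equiv.Perm.inv_eq_iff_eq, ← hz.1 g hgS _ (hTS t t.2)] at hfix'
  have hgt : g * f t = f t' := hz.2 (Finset.mul_mem_mul hgS (hTS t t.2))
    (one_mul (f t') ▸ Finset.mul_mem_mul h1 (hTS t' t'.2)) hfix'
  exact hg ⟨t' * (t : H)⁻¹, by rw [map_mul, map_inv, ← hgt, mul_inv_cancel_right]⟩

section Densities

variable [Fintype Z] {D T₀ : Finset H} {δ : ℝ}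

lemma IsFolner.density_snd_le (hT : IsFolner D δ T) :
    density (fun v : Z × T => ∃ d ∈ D, d * (v.2 : H) ∉ T) ≤ δ :=
  (_root_.density_snd_le fun t : T => ∃ d ∈ D, d * (t : H) ∉ T).trans hT.density_le

lemma permDist_blockAction_mul_le (hT : IsFolner D δ T) (hD : T₀ * T₀⁻¹ ⊆ D)
    (hρ : ∀ y, ρ y ∈ T₀) (hσ : density (fun z => ¬ IsGoodPoint σ S z) ≤ δ) {g h : G}
    (hg : g ∈ S) (hh : h ∈ S) :
    permDist (blockAction f σ ρ T (g * h)) (blockAction f σ ρ T g * blockAction f σ ρ T h) ≤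
      2 * δ := by
  have hconj : blockAction f σ ρ T g * blockAction f σ ρ T h =
      (Equiv.prodCongrLeft fun t : T => σ (f t))⁻¹ * (skewProduct σ ρ T g * skewProduct σ ρ T h) *
        Equiv.prodCongrLeft fun t : T => σ (f t) := by
    simp only [blockAction]
    group
  rw [hconj, blockAction, permDist_mul_right, permDist_mul_left, permDist_eq_density, two_mul]
  refine (density_le_add fun v hv => ?_).trans
    (add_le_add (density_not_isGoodPoint_fst_le hσ) hT.density_snd_le)
  by_contra! hv'
  exact hv (skewProduct_mul_apply hρ (hv'.1.1 g hg h hh) fun d hd => hv'.2 d (hD hd))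

lemma permDist_blockAction_map_le (hT : IsFolner D δ T) {h : H} (hhD : h ∈ D)
    (hσ : density (fun z => ¬ IsGoodPoint σ S z) ≤ δ)
    (hρ : density (fun z => ρ (σ (f h) z) ≠ h * ρ z) ≤ 3 * δ) (hh : f h ∈ S)
    (hTS : ∀ t ∈ T, f t ∈ S) :
    permDist (blockAction f σ ρ T (f h)) ((Equiv.refl Z).prodCongr (translatePerm T h)) ≤
      5 * δ := by
  let C : Perm (Z × T) := Equiv.prodCongrLeft fun t : T => σ (f t)
  have hequiv : density (fun v => ρ (σ (f h) (C v).1) ≠ h * ρ (C v).1) ≤ 3 * δ :=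
    (density_comp_equiv C fun v => ρ (σ (f h) v.1) ≠ h * ρ v.1).trans_le
      ((density_fst_le fun z => ρ (σ (f h) z) ≠ h * ρ z).trans hρ)
  have hgood : density (fun v : Z × T =>
      ¬ IsGoodPoint σ S v.1 ∨ ∃ d ∈ D, d * (v.2 : H) ∉ T) ≤ δ + δ :=
    (density_or_le _ _).trans
      (add_le_add (density_not_isGoodPoint_fst_le hσ) hT.density_snd_le)
  rw [permDist_eq_density]
  refine (density_le_add fun v hv => ?_).trans
    ((add_le_add hequiv hgood).trans_eq (by ring))
  by_contra! hv'
  exact hv (blockAction_map_apply hv'.2.1 hh (hTS v.2 v.2.2) (hv'.2.2 h hhD) hv'.1)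

lemma density_blockAction_fst_eq_le (hσ : density (fun z => ¬ IsGoodPoint σ S z) ≤ δ) {g : G}
    (hg : g ∉ f.range) (h1 : 1 ∈ S) (hgS : g ∈ S) (hTS : ∀ t ∈ T, f t ∈ S) :
    density (fun v => (blockAction f σ ρ T g v).1 = v.1) ≤ δ := by
  refine (density_mono fun v hv => ?_).trans (density_not_isGoodPoint_fst_le hσ)
  exact fun hz => blockAction_apply_fst_ne hg v.2 hz h1 hgS hTS hv

end Densities

/-- The permutations `A g` of `Z × T` model `G` relative to its subgroup `H`, up to `ε` and as far
as the elements of `F` and `E` are concerned: they are almost multiplicative, an element of `H`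
acts as a translation of `T` alone, and an element outside `H` moves the `Z`-coordinate. -/
structure IsBlock [Fintype Z] (f : H →* G) (F : Finset G) (E : Finset H) (ε : ℝ)
    (A : G → Perm (Z × T)) : Prop where
  permDist_mul_le : ∀ g ∈ F, ∀ h ∈ F, permDist (A (g * h)) (A g * A h) ≤ ε
  permDist_map_le : ∀ h ∈ E,
    permDist (A (f h)) ((Equiv.refl Z).prodCongr (translatePerm T h)) ≤ ε
  density_fst_eq_le : ∀ g ∈ F, g ∉ f.range → density (fun v => (A g v).1 = v.1) ≤ ε

lemma IsSofic.exists_isBlock (hG : IsSofic G) (hf : Function.Injective f) (F : Finset G)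
    {E D T₀ : Finset H} {δ : ℝ} (hδ : 0 < δ) (hT₀ : IsFolner E δ T₀) (hT : IsFolner D δ T)
    (hD : T₀ * T₀⁻¹ ∪ E ⊆ D) :
    ∃ (Z : Type) (_ : Fintype Z) (_ : Nonempty Z) (A : G → Perm (Z × T)),
      IsBlock f F E (5 * δ) A := by
  set S : Finset G := insert 1 (F ∪ (E ∪ T).image f) with hS
  have h1 : 1 ∈ S := Finset.mem_insert_self _ _
  have hF (g) (hg : g ∈ F) : g ∈ S := by simp [hS, hg]
  have hES (h) (hh : h ∈ E ∪ T) : f h ∈ S :=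
    Finset.mem_insert_of_mem (Finset.mem_union_right _ (Finset.mem_image_of_mem f hh))
  have hTS (t) (ht : t ∈ T) : f t ∈ S := hES t (Finset.mem_union_right _ ht)
  obtain ⟨Z, _, _, σ, ρ, hρ, hσ, hρE⟩ := hG.exists_almost_equivariant hf hT₀ S hδ
  refine ⟨Z, inferInstance, inferInstance, blockAction f σ ρ T, fun g hg h hh => ?_,
    fun h hh => ?_, fun g hg hgf => ?_⟩
  · refine (permDist_blockAction_mul_le hT (Finset.union_subset_left hD) hρ hσ (hF g hg)
      (hF h hh)).trans (by linarith)
  · exact permDist_blockAction_map_le hT (Finset.union_subset_right hD hh) hσ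
      ((hρE h hh).trans_eq (by ring)) (hES h (Finset.mem_union_left _ hh)) hTS
  · exact (density_blockAction_fst_eq_le hσ hgf h1 (hF g hg) hTS).trans (by linarith)

end Block

/-! ### Combining the models -/

section ReducedWords

variable {α : Type*}

/-- Left multiplication by the generator `a` of the free product of the groups `⟨a | a ^ 2⟩`, on
reduced words of length at most `M`; words of length `M` that it would lengthen are fixed. -/
noncomputable def toggleHead (M : ℕ) (a : α) (l : List α) : List α :=
  if l.head? = some a then l.tail else if l.length < M then a :: l else l

lemma toggleHead_of_isChain {M : ℕ} {a : α} {l : List α} (hl : (a :: l).IsChain (· ≠ ·))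
    (hM : l.length < M) : toggleHead M a l = a :: l := by
  have ha : l.head? ≠ some a := fun h => (List.isChain_cons.1 hl).1 a h rfl
  simp [toggleHead, ha, hM]

lemma isChain_toggleHead (M : ℕ) (a : α) {l : List α} (hl : l.IsChain (· ≠ ·)) :
    (toggleHead M a l).IsChain (· ≠ ·) := by
  unfold toggleHead
  split_ifs with ha hM
  · exact hl.tail
  · refine List.isChain_cons.2 ⟨fun y hy hay => ha ?_, hl⟩
    rwa [hay]
  · exact hl

lemma length_toggleHead_le {M : ℕ} (a : α) {l : List α} (hl : l.length ≤ M) :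
    (toggleHead M a l).length ≤ M := by
  unfold toggleHead
  split_ifs with ha hM
  · exact (List.tail_sublist l).length_le.trans hl
  · exact hM
  · exact hl

lemma toggleHead_toggleHead {M : ℕ} (a : α) {l : List α} (hl : l.IsChain (· ≠ ·))
    (hM : l.length ≤ M) : toggleHead M a (toggleHead M a l) = l := by
  by_cases ha : l.head? = some a
  · obtain ⟨l, rfl⟩ := List.head?_eq_some_iff.1 ha
    have : toggleHead M a (a :: l) = l := by simp [toggleHead]
    rw [this, toggleHead_of_isChain hl hM]
  · by_cases hM' : l.length < M <;> simp [toggleHead, ha, hM']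

/-- Reduced words of length at most `M` in letters that are involutions. -/
abbrev ReducedWord (α : Type*) (M : ℕ) : Type _ :=
  {l : List α // l.IsChain (· ≠ ·) ∧ l.length ≤ M}

lemma finite_reducedWord [Finite α] (M : ℕ) : Finite (ReducedWord α M) :=
  ((List.finite_length_le α M).subset fun _ hl => hl.2).to_subtype

/-- `toggleHead`, as a permutation of the reduced words. -/
noncomputable def togglePerm (M : ℕ) (a : α) : Perm (ReducedWord α M) :=
  Function.Involutive.toPerm
    (fun l => ⟨toggleHead M a l, isChain_toggleHead M a l.2.1, length_toggleHead_le a l.2.2⟩)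
    fun l => Subtype.ext (toggleHead_toggleHead a l.2.1 l.2.2)

lemma prod_togglePerm_apply_nil {M : ℕ} {s : List α} (hs : s.IsChain (· ≠ ·))
    (hM : s.length ≤ M) :
    ((s.map (togglePerm M)).prod ⟨[], List.isChain_nil, M.zero_le⟩ : List α) = s := by
  induction s with
  | nil => rfl
  | cons a s ih =>
    rw [List.map_cons, List.prod_cons, Equiv.Perm.mul_apply]
    change toggleHead M a ((s.map (togglePerm M)).prod _ : List α) = a :: s
    rw [ih hs.tail (Nat.le_of_succ_le hM), toggleHead_of_isChain hs hM]

lemma exists_finite_group_prod_ne_one.{u} (α : Type u) [Finite α] (M : ℕ) :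
    ∃ (Q : Type u) (_ : Group Q) (_ : Fintype Q) (c : α → Q), (∀ a, (c a)⁻¹ = c a) ∧
      ∀ s : List α, s ≠ [] → s.IsChain (· ≠ ·) → s.length ≤ M → (s.map c).prod ≠ 1 := by
  have := finite_reducedWord (α := α) M
  refine ⟨Perm (ReducedWord α M), inferInstance, Fintype.ofFinite _, togglePerm M,
    fun a => Function.Involutive.toPerm_symm _, fun s hs hchain hM h => hs ?_⟩
  rw [← prod_togglePerm_apply_nil hchain hM, h, Equiv.Perm.one_apply]

end ReducedWords

section CombinedSpace

section BaseHom

variable {X T Q : Type*}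

/-- The action of `Perm T` on the middle factor of `X × T × Q`. -/
def baseHom (X T Q : Type*) : Perm T →* Perm (X × T × Q) where
  toFun τ := (Equiv.refl X).prodCongr (τ.prodCongr (Equiv.refl Q))
  map_one' := rfl
  map_mul' _ _ := rfl

lemma baseHom_apply (τ : Perm T) (v : X × T × Q) :
    baseHom X T Q τ v = (v.1, τ v.2.1, v.2.2) :=
  rfl

lemma permDist_baseHom_le [Fintype X] [Fintype T] [Fintype Q] (σ τ : Perm T) :
    permDist (baseHom X T Q σ) (baseHom X T Q τ) ≤ permDist σ τ := by
  simp only [permDist_eq_density]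
  refine (density_mono fun v hv h => hv ?_).trans
    ((density_snd_le fun p : T × Q => σ p.1 ≠ τ p.1).trans (density_fst_le fun t => σ t ≠ τ t))
  rw [baseHom_apply, baseHom_apply, h]

lemma density_baseHom_eq_le [Fintype X] [Fintype T] [Fintype Q] (τ : Perm T) :
    density (fun v => baseHom X T Q τ v = v) ≤ density fun t => τ t = t :=
  (density_mono fun _ hv => congrArg (fun v => v.2.1) hv).trans
    ((density_snd_le fun p : T × Q => τ p.1 = p.1).trans (density_fst_le fun t => τ t = t))

end BaseHom

variable {ι : Type*} {Z : ι → Type*} {T Q : Type*}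

lemma density_block_le [Fintype ι] [∀ b, Fintype (Z b)] [Fintype T] [Fintype Q] (b : ι)
    (P : Z b × T → Prop) :
    density (fun v : (∀ b, Z b) × T × Q => P (v.1 b, v.2.1)) ≤ density P :=
  let e : ((∀ b, Z b) × T × Q) ≃ (Z b × T) × ((∀ j : {j // j ≠ b}, Z j) × Q) :=
    ((Equiv.piSplitAt b Z).prodCongr (Equiv.refl (T × Q))).trans (Equiv.prodProdProdComm _ _ _ _)
  (density_comp_equiv e fun p => P p.1).trans_le (density_fst_le P)

variable [Group Q]

/-- The map of `(∀ b, Z b) × T × Q` that applies `τ` to the coordinate `b` and to `T`. If `z` moves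
to `z'` in `Z b`, the `Q`-coordinate is multiplied by `c ⟨b, z'⟩ * (c ⟨b, z⟩)⁻¹`, which records the
move. -/
noncomputable def blockMap (c : (Σ b, Z b) → Q) (b : ι) (τ : Perm (Z b × T))
    (v : (∀ b, Z b) × T × Q) : (∀ b, Z b) × T × Q :=
  (Function.update v.1 b (τ (v.1 b, v.2.1)).1, (τ (v.1 b, v.2.1)).2,
    c ⟨b, (τ (v.1 b, v.2.1)).1⟩ * (c ⟨b, v.1 b⟩)⁻¹ * v.2.2)

lemma blockMap_one (c : (Σ b, Z b) → Q) (b : ι) : blockMap c b (1 : Perm (Z b × T)) = id := by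
  ext v : 1
  simp [blockMap]

lemma blockMap_mul (c : (Σ b, Z b) → Q) (b : ι) (σ τ : Perm (Z b × T)) :
    blockMap c b (σ * τ) = blockMap c b σ ∘ blockMap c b τ := by
  ext v : 1
  simp [blockMap, mul_assoc]

/-- `blockMap` as an action of `Perm (Z b × T)`. -/
noncomputable def blockHom (c : (Σ b, Z b) → Q) (b : ι) :
    Perm (Z b × T) →* Perm ((∀ b, Z b) × T × Q) :=
  MonoidHom.toHomPerm
    { toFun := blockMap c b
      map_one' := blockMap_one c b
      map_mul' := blockMap_mul c b }

lemma blockHom_apply (c : (Σ b, Z b) → Q) (b : ι) (τ : Perm (Z b × T))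
    (v : (∀ b, Z b) × T × Q) :
    blockHom c b τ v = (Function.update v.1 b (τ (v.1 b, v.2.1)).1, (τ (v.1 b, v.2.1)).2,
      c ⟨b, (τ (v.1 b, v.2.1)).1⟩ * (c ⟨b, v.1 b⟩)⁻¹ * v.2.2) :=
  rfl

lemma blockHom_refl_prodCongr (c : (Σ b, Z b) → Q) (b : ι) (τ : Perm T) :
    blockHom c b ((Equiv.refl (Z b)).prodCongr τ) = baseHom (∀ b, Z b) T Q τ := by
  ext v : 1
  simp [blockHom_apply, baseHom_apply]

/-- The points of the `Z b` that are left and entered when the word `w` of block permutations is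
applied to `v`, the latest move first. -/
noncomputable def moveTrace (c : (Σ b, Z b) → Q) :
    List (Σ b, Perm (Z b × T)) → ((∀ b, Z b) × T × Q) → List (Σ b, Z b)
  | [], _ => []
  | x :: w, v =>
    let u := (w.map fun y => blockHom c y.1 y.2).prod v
    ⟨x.1, (x.2 (u.1 x.1, u.2.1)).1⟩ :: ⟨x.1, u.1 x.1⟩ :: moveTrace c w v

lemma length_moveTrace (c : (Σ b, Z b) → Q) (w : List (Σ b, Perm (Z b × T)))
    (v : (∀ b, Z b) × T × Q) : (moveTrace c w v).length = 2 * w.length := by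
  induction w with
  | nil => rfl
  | cons x w ih =>
    simp only [moveTrace, List.length_cons, ih]
    ring

lemma head?_moveTrace_map_fst (c : (Σ b, Z b) → Q) (w : List (Σ b, Perm (Z b × T)))
    (v : (∀ b, Z b) × T × Q) :
    (moveTrace c w v).head?.map Sigma.fst = w.head?.map Sigma.fst := by
  cases w <;> simp [moveTrace]

lemma prod_blockHom_apply_snd_snd {c : (Σ b, Z b) → Q} (hc : ∀ a, (c a)⁻¹ = c a)
    (w : List (Σ b, Perm (Z b × T))) (v : (∀ b, Z b) × T × Q) :
    ((w.map fun x => blockHom c x.1 x.2).prod v).2.2 = ((moveTrace c w v).map c).prod * v.2.2 := by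
  induction w with
  | nil => simp [moveTrace]
  | cons x w ih =>
    rw [List.map_cons, List.prod_cons, Equiv.Perm.mul_apply, blockHom_apply]
    simp only [moveTrace, List.map_cons, List.prod_cons, ih, hc, mul_assoc]

lemma isChain_moveTrace_cons {c : (Σ b, Z b) → Q} {x : Σ b, Perm (Z b × T)}
    {w : List (Σ b, Perm (Z b × T))} (hxw : (x :: w).IsChain fun x y => x.1 ≠ y.1)
    {v : (∀ b, Z b) × T × Q} (hw : (moveTrace c w v).IsChain (· ≠ ·))
    (hx : let u := (w.map fun y => blockHom c y.1 y.2).prod v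
      (x.2 (u.1 x.1, u.2.1)).1 ≠ u.1 x.1) :
    (moveTrace c (x :: w) v).IsChain (· ≠ ·) := by
  refine List.isChain_cons_cons.2 ⟨fun h => hx (eq_of_heq (Sigma.mk.inj_iff.1 h).2),
    List.isChain_cons.2 ⟨fun y hy hxy => ?_, hw⟩⟩
  have hhead := head?_moveTrace_map_fst c w v
  rw [Option.mem_def.1 hy, Option.map_some, eq_comm, Option.map_eq_some_iff] at hhead
  obtain ⟨x', hx', hfst⟩ := hhead
  exact (List.isChain_cons.1 hxw).1 x' hx' (by rw [hfst, ← hxy])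

variable [Fintype ι] [∀ b, Fintype (Z b)] [Fintype T] [Fintype Q]

lemma permDist_blockHom_le (c : (Σ b, Z b) → Q) (b : ι) (σ τ : Perm (Z b × T)) :
    permDist (blockHom c b σ) (blockHom c b τ) ≤ permDist σ τ := by
  simp only [permDist_eq_density]
  refine (density_mono fun v hv h => hv ?_).trans (density_block_le b fun p => σ p ≠ τ p)
  rw [blockHom_apply, blockHom_apply, h]

lemma density_not_isChain_moveTrace_le (c : (Σ b, Z b) → Q) {ε : ℝ}
    {w : List (Σ b, Perm (Z b × T))} (hw : w.IsChain fun x y => x.1 ≠ y.1)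
    (hmoves : ∀ x ∈ w, density (fun p => (x.2 p).1 = p.1) ≤ ε) :
    density (fun v : (∀ b, Z b) × T × Q => ¬ (moveTrace c w v).IsChain (· ≠ ·)) ≤
      w.length * ε := by
  induction w with
  | nil => simp [moveTrace, density_false]
  | cons x w ih =>
    have hw' := ih hw.tail fun y hy => hmoves y (List.mem_cons_of_mem _ hy)
    have hx := (density_block_le (Q := Q) x.1 fun p => (x.2 p).1 = p.1).trans
      (hmoves x List.mem_cons_self)
    rw [← density_comp_equiv (w.map fun y => blockHom c y.1 y.2).prod] at hx
    refine (density_le_add fun v hv => ?_).trans ((add_le_add hw' hx).trans_eq ?_)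
    · by_contra! hv'
      exact hv (isChain_moveTrace_cons hw hv'.1 hv'.2)
    · rw [List.length_cons]
      push_cast
      ring

lemma density_prod_blockHom_snd_snd_eq_le {c : (Σ b, Z b) → Q} (hc : ∀ a, (c a)⁻¹ = c a) {L : ℕ}
    (hcL : ∀ s : List (Σ b, Z b), s ≠ [] → s.IsChain (· ≠ ·) → s.length ≤ 2 * L →
      (s.map c).prod ≠ 1) {ε : ℝ} {w : List (Σ b, Perm (Z b × T))} (hw₀ : w ≠ [])
    (hwL : w.length ≤ L) (hw : w.IsChain fun x y => x.1 ≠ y.1)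
    (hmoves : ∀ x ∈ w, density (fun p => (x.2 p).1 = p.1) ≤ ε) :
    density (fun v => ((w.map fun x => blockHom c x.1 x.2).prod v).2.2 = v.2.2) ≤
      w.length * ε := by
  refine (density_mono fun v hv hchain => ?_).trans (density_not_isChain_moveTrace_le c hw hmoves)
  rw [prod_blockHom_apply_snd_snd hc, mul_eq_right] at hv
  have hlen := length_moveTrace c w v
  refine hcL _ (fun h => hw₀ ?_) hchain (by omega) hv
  rwa [h, List.length_nil, eq_comm, mul_eq_zero_iff_left two_ne_zero,
    List.length_eq_zero_iff] at hlen

end CombinedSpace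

section AmalgamModel

universe u w

variable {ι : Type w} {H : Type u} [Group H] {G : ι → Type*} [∀ b, Group (G b)]
  {φ : ∀ b, H →* G b} {F : Finset (Σ b, G b)} {E : Finset H} {L : ℕ} {ε : ℝ}

/-- The permutations `A b g` and `B h` of `X` model the pushout of the maps `φ b`, up to `ε` and as
far as the elements of `F` and `E` and the reduced words of length at most `L` are concerned. -/
structure IsAmalgamModel {X : Type*} [Fintype X] (φ : ∀ b, H →* G b) (F : Finset (Σ b, G b))
    (E : Finset H) (L : ℕ) (ε : ℝ) (A : ∀ b, G b → Perm X) (B : H → Perm X) : Prop where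
  permDist_mul_le : ∀ b, ∀ g h : G b, ⟨b, g⟩ ∈ F → ⟨b, h⟩ ∈ F →
    permDist (A b (g * h)) (A b g * A b h) ≤ ε
  permDist_base_mul_le : ∀ h ∈ E, ∀ k ∈ E, permDist (B (h * k)) (B h * B k) ≤ ε
  permDist_map_le : ∀ b, ∀ h ∈ E, ⟨b, φ b h⟩ ∈ F → permDist (A b (φ b h)) (B h) ≤ ε
  le_permDist_one : ∀ h ∈ E, ∀ w : List (Σ b, G b), (∀ x ∈ w, x ∈ F ∧ x.2 ∉ (φ x.1).range) →
    w.IsChain (fun x y => x.1 ≠ y.1) → w.length ≤ L → (w = [] → h ≠ 1) →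
      1 - ε ≤ permDist (B h * (w.map fun x => A x.1 x.2).prod) 1

section OfBlocks

variable {Z : ι → Type*} {Q : Type*} [Group Q] [Fintype ι] [∀ b, Fintype (Z b)]
  [Fintype Q] {D T : Finset H} {A : ∀ b, G b → Perm (Z b × T)} {δ : ℝ}

lemma permDist_blockHom_map_le {b : ι} {f : H →* G b} {F : Finset (G b)} {A : G b → Perm (Z b × T)}
    (hA : IsBlock f F E δ A) (c : (Σ b, Z b) → Q) {h : H} (hh : h ∈ E) :
    permDist (blockHom c b (A (f h))) (baseHom (∀ b, Z b) T Q (translatePerm T h)) ≤ δ := by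
  rw [← blockHom_refl_prodCongr c b]
  exact (permDist_blockHom_le c b _ _).trans (hA.permDist_map_le h hh)

lemma density_base_mul_word_eq_le {c : (Σ b, Z b) → Q} (hc : ∀ a, (c a)⁻¹ = c a)
    (hcL : ∀ s : List (Σ b, Z b), s ≠ [] → s.IsChain (· ≠ ·) → s.length ≤ 2 * L →
      (s.map c).prod ≠ 1)
    (hA : ∀ b, IsBlock (φ b) (F.preimage (Sigma.mk b) sigma_mk_injective.injOn) E δ (A b))
    (τ : Perm T) {w : List (Σ b, G b)} (hw₀ : w ≠ []) (hwL : w.length ≤ L)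
    (hwF : ∀ x ∈ w, x ∈ F ∧ x.2 ∉ (φ x.1).range) (hw : w.IsChain fun x y => x.1 ≠ y.1) :
    density (fun v => (baseHom (∀ b, Z b) T Q τ *
      (w.map fun x => blockHom c x.1 (A x.1 x.2)).prod) v = v) ≤ w.length * δ := by
  let w' : List (Σ b, Perm (Z b × T)) := w.map fun x => ⟨x.1, A x.1 x.2⟩
  have hprod : w.map (fun x => blockHom c x.1 (A x.1 x.2)) =
      w'.map fun x => blockHom c x.1 x.2 := by simp [w']
  have hmoves : ∀ x ∈ w', density (fun p => (x.2 p).1 = p.1) ≤ δ := by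
    intro x hx
    obtain ⟨y, hy, rfl⟩ := List.mem_map.1 hx
    exact (hA y.1).density_fst_eq_le y.2 (Finset.mem_preimage.2 (hwF y hy).1) (hwF y hy).2
  rw [hprod, ← List.length_map (as := w) fun x => (⟨x.1, A x.1 x.2⟩ : Σ b, Perm (Z b × T))]
  refine (density_mono fun v hv => ?_).trans
    (density_prod_blockHom_snd_snd_eq_le hc hcL (w := w') (by simpa [w'] using hw₀)
      (by simpa [w'] using hwL) ((List.isChain_map _).2 hw) hmoves)
  exact congrArg (fun v => v.2.2) hv

lemma IsAmalgamModel.of_isBlock [Nonempty T] [∀ b, Nonempty (Z b)] (hδ : 0 ≤ δ)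
    {c : (Σ b, Z b) → Q} (hc : ∀ a, (c a)⁻¹ = c a)
    (hcL : ∀ s : List (Σ b, Z b), s ≠ [] → s.IsChain (· ≠ ·) → s.length ≤ 2 * L →
      (s.map c).prod ≠ 1)
    (hA : ∀ b, IsBlock (φ b) (F.preimage (Sigma.mk b) sigma_mk_injective.injOn) E δ (A b))
    (hT : IsFolner D δ T) (hD : E ∪ E * E ⊆ D) :
    IsAmalgamModel φ F E L ((L + 1) * δ) (fun b g => blockHom c b (A b g))
      fun h => baseHom (∀ b, Z b) T Q (translatePerm T h) := by
  have hLδ : 0 ≤ L * δ := by positivity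
  have hED (h) (hh : h ∈ E) : h ∈ D := Finset.union_subset_left hD hh
  refine ⟨fun b g h hg hh => ?_, fun h hh k hk => ?_, fun b h hh _ => ?_,
    fun h hh w hwF hw hwL hw₀ => ?_⟩
  · rw [← map_mul]
    exact ((permDist_blockHom_le c b _ _).trans ((hA b).permDist_mul_le g
      (Finset.mem_preimage.2 hg) h (Finset.mem_preimage.2 hh))).trans (by linarith)
  · rw [← map_mul]
    exact ((permDist_baseHom_le _ _).trans (hT.permDist_translatePerm_mul_le (hED k hk)
      (Finset.union_subset_right hD (Finset.mul_mem_mul hh hk)))).trans (by linarith)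
  · exact (permDist_blockHom_map_le (hA b) c hh).trans (by linarith)
  · rw [sub_le_comm, ← density_fixed_eq]
    rcases eq_or_ne w [] with rfl | hw_ne
    · simp only [List.map_nil, List.prod_nil, mul_one]
      exact ((density_baseHom_eq_le _).trans
        (hT.density_translatePerm_eq_le (hED h hh) (hw₀ rfl))).trans (by linarith)
    · refine (density_base_mul_word_eq_le hc hcL hA _ hw_ne hwL hwF hw).trans ?_
      have : (w.length : ℝ) * δ ≤ L * δ := by gcongr
      linarith

end OfBlocks

lemma exists_isAmalgamModel_of_finite [Finite ι] (hinj : ∀ b, Function.Injective (φ b))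
    (hsofic : ∀ b, IsSofic (G b)) (hH : FolnerAmenable H) (F : Finset (Σ b, G b)) (E : Finset H)
    (L : ℕ) (hε : 0 < ε) :
    ∃ (X : Type (max u w)) (_ : Fintype X) (_ : Nonempty X) (A : ∀ b, G b → Perm X)
      (B : H → Perm X), IsAmalgamModel φ F E L ε A B := by
  cases nonempty_fintype ι
  have hδ : 0 < ε / (5 * (L + 1)) := by positivity
  obtain ⟨T₀, hT₀⟩ := hH E _ hδ
  obtain ⟨T, hT⟩ := hH (T₀ * T₀⁻¹ ∪ E ∪ E * E) _ hδ
  have := hT.nonempty.to_subtype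
  choose Z _ _ A hA using fun b => (hsofic b).exists_isBlock (hinj b)
    (F.preimage (Sigma.mk b) sigma_mk_injective.injOn) hδ hT₀ hT Finset.subset_union_left
  obtain ⟨Q, _, _, c, hc, hcL⟩ := exists_finite_group_prod_ne_one (Σ b, Z b) (2 * L)
  have hmodel := IsAmalgamModel.of_isBlock (by positivity) hc hcL hA
    (hT.mono (by linarith)) (Finset.union_subset_union_left Finset.subset_union_right)
  have hε' : ((L : ℝ) + 1) * (5 * (ε / (5 * (L + 1)))) = ε := by field_simp
  rw [hε'] at hmodel
  exact ⟨_, inferInstance, inferInstance, _, _, hmodel⟩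

lemma exists_isAmalgamModel (hinj : ∀ b, Function.Injective (φ b)) (hsofic : ∀ b, IsSofic (G b))
    (hH : FolnerAmenable H) (F : Finset (Σ b, G b)) (E : Finset H) (L : ℕ) (hε : 0 < ε) :
    ∃ (X : Type (max u w)) (_ : Fintype X) (_ : Nonempty X) (A : ∀ b, G b → Perm X)
      (B : H → Perm X), IsAmalgamModel φ F E L ε A B := by
  let s : Finset ι := F.image Sigma.fst
  let j : (Σ b : s, G b) → Σ b, G b := fun x => ⟨x.1, x.2⟩
  have hj : Function.Injective j := by
    rintro ⟨⟨b, hb⟩, g⟩ ⟨⟨b', hb'⟩, g'⟩ h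
    obtain ⟨rfl, h⟩ := Sigma.mk.inj_iff.1 h
    obtain rfl := eq_of_heq h
    rfl
  obtain ⟨X, _, _, A, B, hAB⟩ := exists_isAmalgamModel_of_finite (φ := fun b : s => φ b)
    (fun b => hinj b) (fun b => hsofic b) hH (F.preimage j hj.injOn) E L hε
  let A' (b : ι) (g : G b) : Perm X := if hb : b ∈ s then A ⟨b, hb⟩ g else 1
  have hA' (x : Σ b : s, G b) : A' (j x).1 (j x).2 = A x.1 x.2 := dif_pos x.1.2
  have hs {b} {g : G b} (hg : ⟨b, g⟩ ∈ F) : b ∈ s := Finset.mem_image_of_mem _ hg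
  refine ⟨X, inferInstance, inferInstance, A', B, fun b g h hg hh => ?_,
    hAB.permDist_base_mul_le, fun b h hh hb => ?_, fun h hh w hwF hw hwL hw₀ => ?_⟩
  · simp only [A', dif_pos (hs hg)]
    exact hAB.permDist_mul_le ⟨b, hs hg⟩ g h (Finset.mem_preimage.2 hg) (Finset.mem_preimage.2 hh)
  · simp only [A', dif_pos (hs hb)]
    exact hAB.permDist_map_le ⟨b, hs hb⟩ h hh (Finset.mem_preimage.2 hb)
  · have hw_range : w ∈ Set.range (List.map j) := by
      rw [Set.range_list_map]
      exact fun x hx => ⟨⟨⟨x.1, hs (hwF x hx).1⟩, x.2⟩, rfl⟩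
    obtain ⟨w, rfl⟩ := hw_range
    rw [List.map_map]
    simp only [Function.comp_def, hA']
    refine hAB.le_permDist_one h hh w (fun x hx => ?_) ?_ (by simpa using hwL) (by simpa using hw₀)
    · have := hwF (j x) (List.mem_map_of_mem hx)
      exact ⟨Finset.mem_preimage.2 this.1, this.2⟩
    · exact ((List.isChain_map j).1 hw).imp fun x y hxy h => hxy (congrArg Subtype.val h)

end AmalgamModel

/-! ### Asymptotic homomorphisms -/

lemma exists_base_mul_reduced_prod_eq {ι H : Type*} [Group H] {G : ι → Type*} [∀ b, Group (G b)]
    {φ : ∀ b, H →* G b} (hinj : ∀ b, Function.Injective (φ b)) (x : Monoid.PushoutI φ) :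
    ∃ (h : H) (w : List (Σ b, G b)), (∀ y ∈ w, y.2 ∉ (φ y.1).range) ∧
      w.IsChain (fun y z => y.1 ≠ z.1) ∧
      x = Monoid.PushoutI.base φ h * (w.map fun y => Monoid.PushoutI.of y.1 y.2).prod := by
  obtain ⟨d⟩ := Monoid.PushoutI.NormalWord.transversal_nonempty φ hinj
  let w := Monoid.PushoutI.NormalWord.equiv (d := d) x
  refine ⟨w.head, w.toList, fun y hy hrange => w.ne_one y hy ?_, w.chain_ne, ?_⟩
  · have h := (d.compl y.1).1 (a₁ := (⟨y.2, hrange⟩, ⟨1, d.one_mem y.1⟩))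
      (a₂ := (1, ⟨y.2, w.normalized y.1 y.2 hy⟩)) (by simp)
    exact congrArg Subtype.val (Prod.mk.inj h).1
  · rw [← Monoid.PushoutI.NormalWord.equiv.symm_apply_apply (x : Monoid.PushoutI φ)]
    change Monoid.PushoutI.NormalWord.prod w = _
    rw [Monoid.PushoutI.NormalWord.prod, Monoid.CoprodI.Word.prod, map_list_prod, List.map_map]
    simp [Function.comp_def]

section AsymptoticallyTrivial

variable {I : Type*} {l : Filter I} {X : I → Type*} [∀ i, Fintype (X i)]

/-- The families of permutations that are asymptotically equal to the identity along `l`. The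
quotient by this subgroup turns asymptotic homomorphisms into homomorphisms. -/
def permNullSubgroup (l : Filter I) (X : I → Type*) [∀ i, Fintype (X i)] :
    Subgroup (∀ i, Perm (X i)) where
  carrier := {σ | Tendsto (fun i => permDist (σ i) 1) l (𝓝 0)}
  one_mem' := by simp [permDist_self, tendsto_const_nhds]
  mul_mem' {σ τ} hσ hτ := by
    refine squeeze_zero (fun i => permDist_nonneg _ _) (fun i => ?_) (by simpa using hσ.add hτ)
    calc permDist (σ i * τ i) 1
      _ ≤ permDist (σ i * τ i) (1 * τ i) + permDist (1 * τ i) 1 := permDist_triangle _ _ _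
      _ = permDist (σ i) 1 + permDist (τ i) 1 := by rw [permDist_mul_right, one_mul]
  inv_mem' {σ} hσ := by simpa [← permDist_inv (σ _) 1] using hσ

lemma mem_permNullSubgroup {σ : ∀ i, Perm (X i)} :
    σ ∈ permNullSubgroup l X ↔ Tendsto (fun i => permDist (σ i) 1) l (𝓝 0) :=
  Iff.rfl

instance : (permNullSubgroup l X).Normal where
  conj_mem σ hσ τ := by
    have hconj (i) : permDist (τ i * σ i * (τ i)⁻¹) 1 = permDist (σ i) 1 := by
      rw [← permDist_mul_right (τ i), ← permDist_mul_left (τ i)⁻¹]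
      simp [mul_assoc]
    simpa only [mem_permNullSubgroup, Pi.mul_apply, Pi.inv_apply, hconj] using hσ

lemma mk_permNullSubgroup_eq_iff {σ τ : ∀ i, Perm (X i)} :
    (σ : (∀ i, Perm (X i)) ⧸ permNullSubgroup l X) = τ ↔
      Tendsto (fun i => permDist (σ i) (τ i)) l (𝓝 0) := by
  have hdist (i) : permDist ((σ i)⁻¹ * τ i) 1 = permDist (σ i) (τ i) := by
    rw [← permDist_mul_left (σ i), permDist_comm]
    simp
  simp only [QuotientGroup.eq, mem_permNullSubgroup, Pi.mul_apply, Pi.inv_apply, hdist]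

lemma mk_list_prod_permNullSubgroup {α : Type*} (σ : α → ∀ i, Perm (X i)) (w : List α) :
    ((fun i => (w.map fun x => σ x i).prod : ∀ i, Perm (X i)) : _ ⧸ permNullSubgroup l X) =
      (w.map fun x => (σ x : _ ⧸ permNullSubgroup l X)).prod := by
  induction w with
  | nil => rfl
  | cons x w ih =>
    rw [List.map_cons, List.prod_cons, ← ih]
    rfl

lemma tendsto_permDist_one_of_mk_eq {σ τ : ∀ i, Perm (X i)}
    (h : (σ : (∀ i, Perm (X i)) ⧸ permNullSubgroup l X) = τ) {c : ℝ}
    (hσ : Tendsto (fun i => permDist (σ i) 1) l (𝓝 c)) :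
    Tendsto (fun i => permDist (τ i) 1) l (𝓝 c) := by
  refine (tendsto_iff_of_dist ?_).1 hσ
  refine squeeze_zero (fun i => dist_nonneg) (fun i => ?_) (mk_permNullSubgroup_eq_iff.1 h)
  have h₁ := permDist_triangle (σ i) (τ i) 1
  have h₂ := permDist_triangle (τ i) (σ i) 1
  rw [permDist_comm (τ i) (σ i)] at h₂
  rw [Real.dist_eq, abs_le]
  constructor <;> linarith

lemma isSofic_of_forall_exists_perm {Γ : Type*} [Group Γ]
    (h : ∀ (F : Finset Γ) (ε : ℝ), 0 < ε → ∃ (Y : Type*) (_ : Fintype Y) (_ : Nonempty Y)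
      (ψ : Γ → Perm Y), (∀ g ∈ F, g ≠ 1 → 1 - ε < permDist (ψ g) 1) ∧
        ∀ g₁ ∈ F, ∀ g₂ ∈ F, permDist (ψ (g₁⁻¹ * g₂)) ((ψ g₁)⁻¹ * ψ g₂) < ε) :
    IsSofic Γ := by
  intro F ε hε
  obtain ⟨Y, _, _, ψ, hfree, hmul⟩ := h F ε hε
  let e := (Fintype.equivFin Y).permCongrHom
  refine ⟨Fintype.card Y, Fintype.card_pos, fun g => e (ψ g), fun g hg hg1 => ?_,
    fun g₁ hg₁ g₂ hg₂ => ?_⟩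
  · rw [← map_one e, permDist_permCongrHom]
    exact hfree g hg hg1
  · rw [← map_inv, ← map_mul, permDist_permCongrHom]
    exact hmul g₁ hg₁ g₂ hg₂

lemma isSofic_of_hom_quotient_permNullSubgroup [l.NeBot] [∀ i, Nonempty (X i)] {Γ : Type*} [Group Γ]
    (Φ : Γ →* (∀ i, Perm (X i)) ⧸ permNullSubgroup l X)
    (hΦ : ∀ x ≠ 1, ∃ σ : ∀ i, Perm (X i), ↑σ = Φ x ∧
      Tendsto (fun i => permDist (σ i) 1) l (𝓝 1)) :
    IsSofic Γ := by
  choose ψ hψ using fun x => QuotientGroup.mk_surjective (Φ x)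
  refine isSofic_of_forall_exists_perm fun F ε hε => ?_
  have hfree : ∀ᶠ i in l, ∀ g ∈ F, g ≠ 1 → 1 - ε < permDist (ψ g i) 1 := by
    refine (Filter.eventually_all_finset F).2 fun g _ => Filter.eventually_imp_distrib_left.2 ?_
    intro hg
    obtain ⟨σ, hσ, hσ_tendsto⟩ := hΦ g hg
    exact (tendsto_permDist_one_of_mk_eq (hσ.trans (hψ g).symm) hσ_tendsto).eventually_const_lt
      (sub_lt_self 1 hε)
  have hmul : ∀ᶠ i in l, ∀ g₁ ∈ F, ∀ g₂ ∈ F,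
      permDist (ψ (g₁⁻¹ * g₂) i) ((ψ g₁ i)⁻¹ * ψ g₂ i) < ε := by
    refine (Filter.eventually_all_finset F).2 fun g₁ _ =>
      (Filter.eventually_all_finset F).2 fun g₂ _ => ?_
    refine (mk_permNullSubgroup_eq_iff (τ := (ψ g₁)⁻¹ * ψ g₂).1 ?_).eventually_lt_const hε
    rw [QuotientGroup.mk_mul, QuotientGroup.mk_inv, hψ, hψ, hψ, map_mul, map_inv]
  obtain ⟨i, hi⟩ := (hfree.and hmul).exists
  exact ⟨X i, inferInstance, inferInstance, fun g => ψ g i, hi⟩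

end AsymptoticallyTrivial

section AsymptoticModels

variable {ι H : Type*} [Group H] {G : ι → Type*} [∀ b, Group (G b)] {φ : ∀ b, H →* G b}
  {I : Type*} {l : Filter I} {X : I → Type*} [∀ i, Fintype (X i)]
  {F : I → Finset (Σ b, G b)} {E : I → Finset H} {L : I → ℕ} {ε : I → ℝ}
  {A : ∀ i, ∀ b, G b → Perm (X i)} {B : ∀ i, H → Perm (X i)}

lemma exists_hom_quotient_permNullSubgroup
    (hAB : ∀ i, IsAmalgamModel φ (F i) (E i) (L i) (ε i) (A i) (B i))
    (hF : ∀ x, ∀ᶠ i in l, x ∈ F i) (hE : ∀ h, ∀ᶠ i in l, h ∈ E i) (hε : Tendsto ε l (𝓝 0)) :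
    ∃ Φ : Monoid.PushoutI φ →* (∀ i, Perm (X i)) ⧸ permNullSubgroup l X,
      (∀ b g, Φ (Monoid.PushoutI.of b g) = ((fun i => A i b g : ∀ i, Perm (X i)) : _ ⧸ _)) ∧
      ∀ h, Φ (Monoid.PushoutI.base φ h) = ((fun i => B i h : ∀ i, Perm (X i)) : _ ⧸ _) := by
  have mk_eq {σ τ : ∀ i, Perm (X i)} (h : ∀ᶠ i in l, permDist (σ i) (τ i) ≤ ε i) :
      (σ : (∀ i, Perm (X i)) ⧸ permNullSubgroup l X) = τ :=
    mk_permNullSubgroup_eq_iff.2 (squeeze_zero' (.of_forall fun i => permDist_nonneg _ _) h hε)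
  let f (b) : G b →* (∀ i, Perm (X i)) ⧸ permNullSubgroup l X :=
    MonoidHom.mk' (fun g => ((fun i => A i b g : ∀ i, Perm (X i)) : _ ⧸ _)) fun g h => by
      refine mk_eq ?_
      filter_upwards [hF ⟨b, g⟩, hF ⟨b, h⟩] with i hg hh
      exact (hAB i).permDist_mul_le b g h hg hh
  let k : H →* (∀ i, Perm (X i)) ⧸ permNullSubgroup l X :=
    MonoidHom.mk' (fun h => ((fun i => B i h : ∀ i, Perm (X i)) : _ ⧸ _)) fun h h' => by
      refine mk_eq ?_
      filter_upwards [hE h, hE h'] with i hh hh'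
      exact (hAB i).permDist_base_mul_le h hh h' hh'
  have hfk (b) : (f b).comp (φ b) = k := by
    ext h
    refine mk_eq ?_
    filter_upwards [hE h, hF ⟨b, φ b h⟩] with i hh hb
    exact (hAB i).permDist_map_le b h hh hb
  exact ⟨Monoid.PushoutI.lift f k hfk, fun b g => Monoid.PushoutI.lift_of .., fun h =>
    Monoid.PushoutI.lift_base ..⟩

lemma tendsto_permDist_base_mul_word [∀ i, Nonempty (X i)]
    (hAB : ∀ i, IsAmalgamModel φ (F i) (E i) (L i) (ε i) (A i) (B i))
    (hF : ∀ x, ∀ᶠ i in l, x ∈ F i) (hE : ∀ h, ∀ᶠ i in l, h ∈ E i) (hL : Tendsto L l atTop)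
    (hε : Tendsto ε l (𝓝 0)) {h : H} {w : List (Σ b, G b)} (hw_range : ∀ x ∈ w, x.2 ∉ (φ x.1).range)
    (hw : w.IsChain fun x y => x.1 ≠ y.1) (hw₀ : w = [] → h ≠ 1) :
    Tendsto (fun i => permDist (B i h * (w.map fun x => A i x.1 x.2).prod) 1) l (𝓝 1) := by
  have hlower : Tendsto (fun i => 1 - ε i) l (𝓝 1) := by simpa using hε.const_sub 1
  have hwF : ∀ᶠ i in l, ∀ x ∈ w.toFinset, x ∈ F i :=
    (Filter.eventually_all_finset _).2 fun x _ => hF x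
  refine tendsto_of_tendsto_of_tendsto_of_le_of_le' hlower tendsto_const_nhds ?_
    (.of_forall fun i => permDist_le_one _ _)
  filter_upwards [hwF, hE h, hL.eventually_ge_atTop w.length] with i hwF hh hwL
  exact (hAB i).le_permDist_one h hh w (fun x hx => ⟨hwF x (List.mem_toFinset.2 hx),
    hw_range x hx⟩) hw hwL hw₀

lemma isSofic_pushoutI_of_isAmalgamModel [l.NeBot] [∀ i, Nonempty (X i)]
    (hinj : ∀ b, Function.Injective (φ b))
    (hAB : ∀ i, IsAmalgamModel φ (F i) (E i) (L i) (ε i) (A i) (B i))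
    (hF : ∀ x, ∀ᶠ i in l, x ∈ F i) (hE : ∀ h, ∀ᶠ i in l, h ∈ E i) (hL : Tendsto L l atTop)
    (hε : Tendsto ε l (𝓝 0)) : IsSofic (Monoid.PushoutI φ) := by
  obtain ⟨Φ, hΦ_of, hΦ_base⟩ := exists_hom_quotient_permNullSubgroup hAB hF hE hε
  refine isSofic_of_hom_quotient_permNullSubgroup Φ fun x hx => ?_
  obtain ⟨h, w, hw_range, hw, rfl⟩ := exists_base_mul_reduced_prod_eq hinj x
  refine ⟨fun i => B i h * (w.map fun x => A i x.1 x.2).prod, ?_,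
    tendsto_permDist_base_mul_word hAB hF hE hL hε hw_range hw ?_⟩
  · rw [map_mul, hΦ_base, map_list_prod, List.map_map]
    simp only [Function.comp_def, hΦ_of]
    rw [← mk_list_prod_permNullSubgroup fun (x : Σ b, G b) i => A i x.1 x.2]
    rfl
  · rintro rfl rfl
    simp at hx

end AsymptoticModels

lemma eventually_mem_finset_atTop {α : Type*} (x : α) : ∀ᶠ s : Finset α in atTop, x ∈ s :=
  (eventually_ge_atTop {x}).mono fun _ hs => hs (Finset.mem_singleton_self x)

theorem isSofic_amalgamatedFreeProduct_general {ι H : Type*} [Group H] {G : ι → Type*}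
    [∀ b, Group (G b)] (φ : ∀ b, H →* G b) (hinj : ∀ b, Function.Injective (φ b))
    (hsofic : ∀ b, IsSofic (G b)) (hH : FolnerAmenable H) : IsSofic (Monoid.PushoutI φ) := by
  let l : Filter (Finset (Σ b, G b) × Finset H × ℕ) := atTop ×ˢ atTop ×ˢ atTop
  choose X _ _ A B hAB using fun i : Finset (Σ b, G b) × Finset H × ℕ =>
    exists_isAmalgamModel hinj hsofic hH i.1 i.2.1 i.2.2 (Nat.one_div_pos_of_nat (n := i.2.2))
  have hL : Tendsto (fun i => i.2.2) l atTop := tendsto_snd.comp tendsto_snd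
  exact isSofic_pushoutI_of_isAmalgamModel hinj hAB
    (fun x => tendsto_fst.eventually (eventually_mem_finset_atTop x))
    (fun h => (tendsto_fst.comp tendsto_snd).eventually (eventually_mem_finset_atTop h)) hL
    (tendsto_one_div_add_atTop_nhds_zero_nat.comp hL)

/-- If `Γ₁` and `Γ₂` are sofic groups and `H` is a monotileably amenable group embedded as a
common subgroup of `Γ₁` and `Γ₂`, then the free product with amalgamation `Γ₁ *_H Γ₂`
(the pushout of the inclusions `H → Γ₁` and `H → Γ₂`) is sofic. -/
theorem isSofic_amalgamatedFreeProduct {H : Type*} [Group H] [DecidableEq H]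
    {G : Bool → Type*} [∀ b, Group (G b)] (φ : ∀ b, H →* G b)
    (hinj : ∀ b, Function.Injective (φ b))
    (hsofic : ∀ b, IsSofic (G b)) (hH : MonotileablyAmenable H) :
    IsSofic (Monoid.PushoutI φ) :=
  isSofic_amalgamatedFreeProduct_general φ hinj hsofic hH.folnerAmenable
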